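/- For |x| < 1/4 real, the sum of the series \sum_{k=0}^{∞} C_k x^{k+1} (Catalan numbers C_k) converges and equals 2x/(1+sqrt(1-4x)). -/

import Mathlib

lemma catalan_partial (n : ℕ) :
    ∑ k ∈ Finset.range n, (catalan k : ℝ) * (1 / 4) ^ (k + 1)
      = (1 - (n.centralBinom : ℝ) * (1 / 4) ^ n) / 2 := by
  induction n with
  | zero => simp
  | succ n ih =>
    rw [Finset.sum_range_succ, ih]
    have h1 : ((n : ℝ) + 1) * catalan n = n.centralBinom := by
      exact_mod_cast succ_mul_catalan_eq_centralBinom n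
    have h2 : ((n : ℝ) + 1) * (n + 1).centralBinom = 2 * (2 * n + 1) * n.centralBinom := by
      exact_mod_cast Nat.succ_mul_centralBinom_succ n
    have h3 : ((n + 1).centralBinom : ℝ) = 2 * (2 * n + 1) * catalan n := by
      have : (n : ℝ) + 1 ≠ 0 := by positivity
      apply mul_left_cancel₀ this
      rw [h2, ← h1]; ring
    rw [h3, ← h1]
    ring

/-- For real `x` with `|x| < 1/4`, the series `∑_{k≥0} catalan k * x^{k+1}`
converges to `2x/(1 + √(1-4x))`. -/
theorem catalan_series_sum (x : ℝ) (hx : |x| < 1 / 4) :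
    HasSum (fun k : ℕ => (catalan k : ℝ) * x ^ (k + 1))
      (2 * x / (1 + Real.sqrt (1 - 4 * x))) := by
  have hb : ∀ n : ℕ, ∑ k ∈ Finset.range n, (catalan k : ℝ) * (1 / 4) ^ (k + 1) ≤ 1 / 2 := by
    intro n
    rw [catalan_partial]
    have : (0 : ℝ) ≤ (n.centralBinom : ℝ) * (1 / 4) ^ n := by positivity
    linarith
  have hs : Summable (fun k : ℕ => (catalan k : ℝ) * (1 / 4) ^ (k + 1)) :=
    summable_of_sum_range_le (fun k => by positivity) hb
  have hle : ∑' k : ℕ, (catalan k : ℝ) * (1 / 4) ^ (k + 1) ≤ 1 / 2 :=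
    Real.tsum_le_of_sum_range_le (fun k => by positivity) hb
  have hn : ∀ k : ℕ, ‖(catalan k : ℝ) * x ^ (k + 1)‖ ≤ (catalan k : ℝ) * (1 / 4) ^ (k + 1) := by
    intro k
    rw [norm_mul, norm_pow, Real.norm_eq_abs, Real.norm_eq_abs, Nat.abs_cast]
    gcongr
  have hsn : Summable (fun k : ℕ => ‖(catalan k : ℝ) * x ^ (k + 1)‖) :=
    Summable.of_nonneg_of_le (fun k => norm_nonneg _) hn hs
  have hsx := hsn.of_norm
  have hS : ‖∑' k : ℕ, (catalan k : ℝ) * x ^ (k + 1)‖ ≤ 1 / 2 :=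
    (tsum_of_norm_bounded hs.hasSum hn).trans hle
  have hrec : ∑' k : ℕ, (catalan k : ℝ) * x ^ (k + 1)
      = x + (∑' k : ℕ, (catalan k : ℝ) * x ^ (k + 1)) * ∑' k : ℕ, (catalan k : ℝ) * x ^ (k + 1) := by
    rw [tsum_mul_tsum_eq_tsum_sum_antidiagonal_of_summable_norm hsn hsn, hsx.tsum_eq_zero_add]
    simp only [catalan_zero, Nat.cast_one, zero_add, pow_one, one_mul]
    congr 2
    funext n
    rw [catalan_succ', Nat.cast_sum, Finset.sum_mul]
    refine Finset.sum_congr rfl fun p hp => ?_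
    rw [← Finset.HasAntidiagonal.mem_antidiagonal.mp hp]
    push_cast
    ring
  have key : ∑' k : ℕ, (catalan k : ℝ) * x ^ (k + 1) = 2 * x / (1 + Real.sqrt (1 - 4 * x)) := by
    generalize ∑' k : ℕ, (catalan k : ℝ) * x ^ (k + 1) = S at hS hrec
    have h1 : S ≤ 1 / 2 := (le_abs_self S).trans hS
    have h2 : Real.sqrt (1 - 4 * x) = 1 - 2 * S := by
      rw [show 1 - 4 * x = (1 - 2 * S) ^ 2 by linarith [hrec, show (1 - 2 * S) ^ 2 = 1 - 4 * S + 4 * (S * S) by ring]]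
      exact Real.sqrt_sq (by linarith)
    have h3 : 0 < 1 + Real.sqrt (1 - 4 * x) := by positivity
    rw [eq_div_iff h3.ne', h2]
    linarith [hrec, show S * (1 + (1 - 2 * S)) = 2 * S - 2 * (S * S) by ring]
  exact key ▸ hsx.hasSum
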